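/- Let M ∈ ℕ₀ and 0 ≤ κ < 1, and let P be a point set in [0,1)² with N = 2^{M+κ} points. Suppose j = (j₁,j₂) ∈ ℕ₀² with |j| = M+1 and m ∈ 𝔻_j are such that I_{j,m} contains exactly one point p of P. Let j' = (j₁+1,j₂) and j'' = (j₁,j₂+1), and let m' ∈ 𝔻_{j'} and m'' ∈ 𝔻_{j''} be the unique indices with p ∈ I_{j',m'} ⊂ I_{j,m} and p ∈ I_{j'',m''} ⊂ I_{j,m}. Then ρ_{j,m} := μ_{j,m}² + μ_{j',m'}² + μ_{j'',m''}² satisfies 2^{2M}·ρ_{j,m} ≥ 2^{-2}·γ(κ−1). -/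

import Mathlib

open MeasureTheory

noncomputable section

/-- The half-open unit square `[0,1) × [0,1)` in `ℝ × ℝ`. -/
def unitSq : Set (ℝ × ℝ) := Set.Ico (0:ℝ) 1 ×ˢ Set.Ico (0:ℝ) 1

/-- The discrepancy function of the point configuration `p`. -/
def disc (N : ℕ) (p : Fin N → ℝ × ℝ) (x : ℝ × ℝ) : ℝ :=
  (∑ i : Fin N, if 0 ≤ (p i).1 ∧ (p i).1 < x.1 ∧ 0 ≤ (p i).2 ∧ (p i).2 < x.2
    then (1:ℝ) else 0) - N * x.1 * x.2

/-- The dyadic interval `I_{j,m}`. -/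
def dyadic (j m : ℕ × ℕ) : Set (ℝ × ℝ) :=
  Set.Ico ((m.1:ℝ)/2^j.1) (((m.1:ℝ)+1)/2^j.1) ×ˢ
    Set.Ico ((m.2:ℝ)/2^j.2) (((m.2:ℝ)+1)/2^j.2)

/-- The one-dimensional Haar function adapted to `[m/2^j, (m+1)/2^j)`. -/
def haar1 (j m : ℕ) (t : ℝ) : ℝ :=
  if (m:ℝ)/2^j ≤ t ∧ t < (2*(m:ℝ)+1)/2^(j+1) then 1
  else if (2*(m:ℝ)+1)/2^(j+1) ≤ t ∧ t < ((m:ℝ)+1)/2^j then -1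
  else 0

/-- The two-dimensional Haar function `h_{j,m}`. -/
def haar (j m : ℕ × ℕ) (x : ℝ × ℝ) : ℝ := haar1 j.1 m.1 x.1 * haar1 j.2 m.2 x.2

/-- `g_κ(α,β) = (αβ − 2^{κ-2})² + (α(1−β) − 2^{κ-4})² + ((1−α)β − 2^{κ-4})²`. -/
def gk (κ α β : ℝ) : ℝ :=
  (α * β - (2:ℝ) ^ (κ - 2)) ^ 2 + (α * (1 - β) - (2:ℝ) ^ (κ - 4)) ^ 2 +
    ((1 - α) * β - (2:ℝ) ^ (κ - 4)) ^ 2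

/-- `h(κ) = inf { g_κ(α,β) : 1/2 ≤ α < 1, 1/2 ≤ β < 1 }`. -/
def hfun (κ : ℝ) : ℝ :=
  sInf { t : ℝ | ∃ α β : ℝ, 1/2 ≤ α ∧ α < 1 ∧ 1/2 ≤ β ∧ β < 1 ∧ t = gk κ α β }

/-- `γ(κ) = min(9·2^{2κ-13}, 2^{-4}·h(κ))`. -/
def gam (κ : ℝ) : ℝ := min (9 * (2:ℝ) ^ (2 * κ - 13)) ((2:ℝ) ^ (-4 : ℝ) * hfun κ)

/-!
The discrepancy function is a combination of tensor products and `haar` is one, so `μ_{j,m}` can be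
computed one coordinate at a time. Pairing `haar1 j m` with the indicator of `(z, ∞)` gives
`-2^{-(j+1)}` times the Faber hat function at `z`, which vanishes off the dyadic interval. Hence
if `p` is the only point in `I_{j,m}` and `α`, `β` are the values of the hat functions at its
coordinates, then `2^{|j|+2} μ_{j,m} = αβ - 2^{κ-2}`, where `N = 2^{|j|+κ}`. On the dyadic half
containing `p`, the hat function takes the value `2 min(α, 1-α)`, so that
`2^{|j|+2} μ_{j',m'} = min(α, 1-α) β - 2^{κ-4}`, and symmetrically for `j''`. If `α, β ≥ 1/2`, the
sum of the three squares is `g_κ(α, β)`. Otherwise `α ≤ 1/2`, say, and `αβ` cannot be close to both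
`2^{κ-2}` and `2^{κ-4}`: the bound `(u - 4x)² + (u - x)² ≥ 9x²/2` with `x = 2^{κ-4}` produces the
other term in the definition of `γ`.
-/

section DyadicIntervals

/-- The one-dimensional dyadic interval `[m/2^j, (m+1)/2^j)`. -/
def dyadicIco (j m : ℕ) : Set ℝ := Set.Ico ((m : ℝ) / 2 ^ j) (((m : ℝ) + 1) / 2 ^ j)

variable {j j' m m' : ℕ} {z : ℝ}

lemma mem_dyadicIco : z ∈ dyadicIco j m ↔ (m : ℝ) ≤ 2 ^ j * z ∧ 2 ^ j * z < m + 1 := by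
  rw [dyadicIco, Set.mem_Ico, div_le_iff₀' (by positivity), lt_div_iff₀' (by positivity)]

lemma mem_dyadicIco_iff_floor_eq : z ∈ dyadicIco j m ↔ ⌊2 ^ j * z⌋ = (m : ℤ) := by
  rw [mem_dyadicIco, Int.floor_eq_iff, Int.cast_natCast]

lemma lt_two_pow_of_mem_dyadicIco (hz : z ∈ dyadicIco j m) (hz1 : z < 1) : m < 2 ^ j := by
  have h : (m : ℝ) < 2 ^ j :=
    (mem_dyadicIco.mp hz).1.trans_lt (mul_lt_of_lt_one_right (by positivity) hz1)
  exact_mod_cast h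

lemma add_one_div_two_pow_le_one (hm : m < 2 ^ j) : ((m : ℝ) + 1) / 2 ^ j ≤ 1 := by
  rw [div_le_one (by positivity)]
  exact_mod_cast hm

lemma dyadicIco_subset_of_mem (hj : j ≤ j') (hz : z ∈ dyadicIco j m)
    (hz' : z ∈ dyadicIco j' m') : dyadicIco j' m' ⊆ dyadicIco j m := by
  intro y hy
  have floor_coarse (x : ℝ) : ⌊2 ^ j * x⌋ = ⌊2 ^ j' * x⌋ / ((2 ^ (j' - j) : ℕ) : ℤ) := by
    rw [← Int.floor_div_natCast, ← Nat.add_sub_of_le hj, pow_add]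
    congr 1
    push_cast
    field_simp
    simp
  rw [mem_dyadicIco_iff_floor_eq] at hy hz hz' ⊢
  rw [floor_coarse, hy, ← hz', ← floor_coarse, hz]

lemma dyadic_subset_of_mem {j j' m m' : ℕ × ℕ} {x : ℝ × ℝ} (hj : j ≤ j')
    (hx : x ∈ dyadic j m) (hx' : x ∈ dyadic j' m') : dyadic j' m' ⊆ dyadic j m :=
  Set.prod_mono (dyadicIco_subset_of_mem hj.1 hx.1 hx'.1)
    (dyadicIco_subset_of_mem hj.2 hx.2 hx'.2)

lemma eq_of_mem_dyadicIco (hz : z ∈ dyadicIco j m) (hz' : z ∈ dyadicIco j m') : m = m' := by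
  rw [mem_dyadicIco_iff_floor_eq] at hz hz'
  exact_mod_cast hz.symm.trans hz'

lemma eq_two_mul_or_of_mem_dyadicIco_succ (hz : z ∈ dyadicIco j m)
    (hz' : z ∈ dyadicIco (j + 1) m') : m' = 2 * m ∨ m' = 2 * m + 1 := by
  rw [mem_dyadicIco] at hz hz'
  rw [pow_succ] at hz'
  have hlt : (m' : ℝ) < 2 * m + 2 := by linarith
  have hgt : (2 * m : ℝ) < m' + 1 := by linarith
  norm_cast at hlt hgt
  lia

end DyadicIntervals

section FaberHat

/-- The Faber hat function of the dyadic interval `[m/2^j, (m+1)/2^j)`: it is supported there,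
piecewise linear, and normalised to take the value `1` at the midpoint. -/
def faber (j m : ℕ) (z : ℝ) : ℝ := max 0 (1 - |2 ^ (j + 1) * z - (2 * m + 1)|)

variable {j m m' : ℕ} {z : ℝ}

lemma faber_le_one : faber j m z ≤ 1 :=
  max_le zero_le_one (sub_le_self _ (abs_nonneg _))

lemma faber_eq_zero_of_notMem (hz : z ∉ dyadicIco j m) : faber j m z = 0 := by
  rw [mem_dyadicIco] at hz
  rw [faber, pow_succ]
  grind

lemma faber_succ (hz : z ∈ dyadicIco j m) (hz' : z ∈ dyadicIco (j + 1) m') :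
    faber (j + 1) m' z = 2 * min (faber j m z) (1 - faber j m z) := by
  have hm' := eq_two_mul_or_of_mem_dyadicIco_succ hz hz'
  rw [mem_dyadicIco] at hz hz'
  simp only [faber, pow_succ] at *
  generalize (2 : ℝ) ^ j = A at *
  rcases hm' with rfl | rfl <;> push_cast at * <;> grind

end FaberHat

section HaarOneDim

variable {j m : ℕ}

lemma haar1_eq_indicator_sub_indicator (j m : ℕ) :
    haar1 j m =
      (Set.Ico ((m : ℝ) / 2 ^ j) ((2 * (m : ℝ) + 1) / 2 ^ (j + 1))).indicator 1 -
        (Set.Ico ((2 * (m : ℝ) + 1) / 2 ^ (j + 1)) (((m : ℝ) + 1) / 2 ^ j)).indicator 1 := by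
  ext t
  simp only [haar1, Pi.sub_apply, Set.indicator, Set.mem_Ico, Pi.one_apply]
  split_ifs <;> linarith

lemma measurable_haar1 : Measurable (haar1 j m) := by
  rw [haar1_eq_indicator_sub_indicator]
  exact (measurable_one.indicator measurableSet_Ico).sub
    (measurable_one.indicator measurableSet_Ico)

lemma norm_haar1_le_one (t : ℝ) : ‖haar1 j m t‖ ≤ 1 := by
  unfold haar1
  split_ifs <;> simp

lemma integrable_mul_haar1 {μ : Measure ℝ} {f : ℝ → ℝ} (hf : Integrable f μ) :
    Integrable (fun t => f t * haar1 j m t) μ :=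
  hf.mul_bdd measurable_haar1.aestronglyMeasurable (.of_forall norm_haar1_le_one)

lemma setIntegral_mul_indicator_Ico {f : ℝ → ℝ} {a b : ℝ} {s : Set ℝ} (hab : a ≤ b)
    (hs : Set.Ico a b ⊆ s) :
    ∫ t in s, f t * (Set.Ico a b).indicator 1 t = ∫ t in a..b, f t := by
  simp_rw [← Set.indicator_mul_right _ f, Pi.one_apply, mul_one]
  rw [setIntegral_indicator measurableSet_Ico, Set.inter_eq_self_of_subset_right hs,
    intervalIntegral.integral_of_le hab, integral_Ico_eq_integral_Ioc]

lemma integral_mul_haar1 (hm : m < 2 ^ j) {f : ℝ → ℝ} (hf : IntegrableOn f (Set.Ico 0 1)) :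
    ∫ t in Set.Ico (0 : ℝ) 1, f t * haar1 j m t =
      (∫ t in ((m : ℝ) / 2 ^ j)..((2 * (m : ℝ) + 1) / 2 ^ (j + 1)), f t) -
        ∫ t in ((2 * (m : ℝ) + 1) / 2 ^ (j + 1))..(((m : ℝ) + 1) / 2 ^ j), f t := by
  have left_nonneg : 0 ≤ (m : ℝ) / 2 ^ j := by positivity
  have right_le_one := add_one_div_two_pow_le_one hm
  have left_le_mid : (m : ℝ) / 2 ^ j ≤ (2 * (m : ℝ) + 1) / 2 ^ (j + 1) := by
    rw [pow_succ]; field_simp; linarith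
  have mid_le_right : (2 * (m : ℝ) + 1) / 2 ^ (j + 1) ≤ ((m : ℝ) + 1) / 2 ^ j := by
    rw [pow_succ]; field_simp; linarith
  have integrable_mul_indicator (a b : ℝ) :
      IntegrableOn (fun t => f t * (Set.Ico a b).indicator 1 t) (Set.Ico 0 1) := by
    simpa only [← Set.indicator_mul_right, Pi.one_apply, mul_one]
      using hf.indicator (measurableSet_Ico (a := a) (b := b))
  simp only [haar1_eq_indicator_sub_indicator, Pi.sub_apply, mul_sub]
  rw [integral_sub (integrable_mul_indicator _ _) (integrable_mul_indicator _ _),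
    setIntegral_mul_indicator_Ico left_le_mid
      (Set.Ico_subset_Ico left_nonneg (mid_le_right.trans right_le_one)),
    setIntegral_mul_indicator_Ico mid_le_right
      (Set.Ico_subset_Ico (left_nonneg.trans left_le_mid) right_le_one)]

lemma intervalIntegral_indicator_Ioi (a b z : ℝ) :
    ∫ t in a..b, (Set.Ioi z).indicator (1 : ℝ → ℝ) t = max 0 (b - z) - max 0 (a - z) := by
  wlog hab : a ≤ b
  · rw [intervalIntegral.integral_symm, this b a z (le_of_not_ge hab), neg_sub]
  rw [intervalIntegral.integral_of_le hab, setIntegral_indicator measurableSet_Ioi,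
    Set.Ioc_inter_Ioi]
  simp only [Pi.one_apply, setIntegral_const, Real.volume_real_Ioc, smul_eq_mul, mul_one]
  grind

lemma integrableOn_indicator_Ioi (z : ℝ) :
    IntegrableOn ((Set.Ioi z).indicator (1 : ℝ → ℝ)) (Set.Ico 0 1) :=
  (integrableOn_const (C := (1 : ℝ)) (by simp)).indicator measurableSet_Ioi

lemma integrableOn_id_Ico : IntegrableOn (fun t : ℝ => t) (Set.Ico 0 1) :=
  continuous_id.integrableOn_Icc.mono_set Set.Ico_subset_Icc_self

lemma faber_div_two_pow (z : ℝ) : faber j m z / 2 ^ (j + 1) =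
    max 0 (1 / 2 ^ (j + 1) - |z - (2 * (m : ℝ) + 1) / 2 ^ (j + 1)|) := by
  have hpos : (0 : ℝ) < 2 ^ (j + 1) := by positivity
  rw [faber, ← max_div_div_right hpos.le, zero_div, sub_div]
  congr 2
  rw [← abs_of_pos hpos, ← abs_div, abs_of_pos hpos, sub_div, mul_div_cancel_left₀ _ hpos.ne']

lemma integral_indicator_Ioi_mul_haar1 (hm : m < 2 ^ j) (z : ℝ) :
    ∫ t in Set.Ico (0 : ℝ) 1, (Set.Ioi z).indicator 1 t * haar1 j m t =
      -(faber j m z / 2 ^ (j + 1)) := by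
  have hleft : (m : ℝ) / 2 ^ j = (2 * m + 1) / 2 ^ (j + 1) - 1 / 2 ^ (j + 1) := by
    rw [pow_succ]; field_simp; ring
  have hright : ((m : ℝ) + 1) / 2 ^ j = (2 * m + 1) / 2 ^ (j + 1) + 1 / 2 ^ (j + 1) := by
    rw [pow_succ]; field_simp; ring
  have hpos : (0 : ℝ) < 1 / 2 ^ (j + 1) := by positivity
  rw [integral_mul_haar1 hm (integrableOn_indicator_Ioi z), intervalIntegral_indicator_Ioi,
    intervalIntegral_indicator_Ioi, faber_div_two_pow, hleft, hright]
  grind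

lemma integral_id_mul_haar1 (hm : m < 2 ^ j) :
    ∫ t in Set.Ico (0 : ℝ) 1, t * haar1 j m t = -(1 / 2 ^ (j + 1)) ^ 2 := by
  rw [integral_mul_haar1 hm integrableOn_id_Ico, integral_id, integral_id, pow_succ]
  field_simp
  ring

end HaarOneDim

section HaarTwoDim

lemma integrableOn_unitSq_mul {f g : ℝ → ℝ} (hf : IntegrableOn f (Set.Ico 0 1))
    (hg : IntegrableOn g (Set.Ico 0 1)) :
    IntegrableOn (fun x : ℝ × ℝ => f x.1 * g x.2) unitSq := by
  rw [unitSq, IntegrableOn, Measure.volume_eq_prod, ← Measure.prod_restrict]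
  exact hf.mul_prod hg

lemma integral_unitSq_mul (f g : ℝ → ℝ) :
    ∫ x in unitSq, f x.1 * g x.2 =
      (∫ t in Set.Ico (0 : ℝ) 1, f t) * ∫ t in Set.Ico (0 : ℝ) 1, g t :=
  setIntegral_prod_mul f g _ _

lemma mul_mul_haar (a b : ℝ) (j m : ℕ × ℕ) (x : ℝ × ℝ) :
    a * b * haar j m x = a * haar1 j.1 m.1 x.1 * (b * haar1 j.2 m.2 x.2) :=
  mul_mul_mul_comm a b _ _

lemma integrableOn_mul_haar {f g : ℝ → ℝ} (hf : IntegrableOn f (Set.Ico 0 1))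
    (hg : IntegrableOn g (Set.Ico 0 1)) (j m : ℕ × ℕ) :
    IntegrableOn (fun x : ℝ × ℝ => f x.1 * g x.2 * haar j m x) unitSq := by
  simp only [mul_mul_haar]
  exact integrableOn_unitSq_mul (integrable_mul_haar1 hf) (integrable_mul_haar1 hg)

lemma integral_mul_haar (f g : ℝ → ℝ) (j m : ℕ × ℕ) :
    ∫ x in unitSq, f x.1 * g x.2 * haar j m x =
      (∫ t in Set.Ico (0 : ℝ) 1, f t * haar1 j.1 m.1 t) *
        ∫ t in Set.Ico (0 : ℝ) 1, g t * haar1 j.2 m.2 t := by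
  simp only [mul_mul_haar]
  exact integral_unitSq_mul (fun t => f t * haar1 j.1 m.1 t) fun t => g t * haar1 j.2 m.2 t

variable {N : ℕ} {p : Fin N → ℝ × ℝ} {j m : ℕ × ℕ}

lemma disc_eq_sum_indicator (hp : ∀ i, p i ∈ unitSq) (x : ℝ × ℝ) :
    disc N p x =
      ∑ i, (Set.Ioi (p i).1).indicator 1 x.1 * (Set.Ioi (p i).2).indicator 1 x.2 -
        N * (x.1 * x.2) := by
  rw [disc, mul_assoc]
  congr 1
  refine Finset.sum_congr rfl fun i _ => ?_
  have h₁ : 0 ≤ (p i).1 := (hp i).1.1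
  have h₂ : 0 ≤ (p i).2 := (hp i).2.1
  simp only [h₁, h₂, true_and, Set.indicator, Set.mem_Ioi, Pi.one_apply, ite_and, ite_mul,
    one_mul, zero_mul]

lemma integral_disc_mul_haar (hp : ∀ i, p i ∈ unitSq) (hm₁ : m.1 < 2 ^ j.1)
    (hm₂ : m.2 < 2 ^ j.2) :
    ∫ x in unitSq, disc N p x * haar j m x =
      (∑ i, faber j.1 m.1 (p i).1 * faber j.2 m.2 (p i).2 - N / 2 ^ (j.1 + j.2 + 2)) /
        2 ^ (j.1 + j.2 + 2) := by
  have integrable_box (i : Fin N) := integrableOn_mul_haar (integrableOn_indicator_Ioi (p i).1)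
    (integrableOn_indicator_Ioi (p i).2) j m
  have integrable_area := integrableOn_mul_haar integrableOn_id_Ico integrableOn_id_Ico j m
  simp only [disc_eq_sum_indicator hp, sub_mul, Finset.sum_mul, mul_assoc (N : ℝ)]
  rw [integral_sub (integrable_finsetSum _ fun i _ => integrable_box i)
      (integrable_area.const_mul _),
    integral_finsetSum _ fun i _ => integrable_box i, integral_const_mul,
    integral_mul_haar (fun t => t) fun t => t, integral_id_mul_haar1 hm₁,
    integral_id_mul_haar1 hm₂]
  simp only [integral_mul_haar, integral_indicator_Ioi_mul_haar1 hm₁,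
    integral_indicator_Ioi_mul_haar1 hm₂, sub_div, Finset.sum_div]
  congr 1
  · refine Finset.sum_congr rfl fun i _ => ?_
    rw [neg_mul_neg, div_mul_div_comm, ← pow_add, add_add_add_comm]
  · simp only [pow_add]
    field_simp

lemma integral_disc_mul_haar_of_unique (hp : ∀ i, p i ∈ unitSq) {i₀ : Fin N}
    (hi₀ : p i₀ ∈ dyadic j m) (huniq : ∀ i, p i ∈ dyadic j m → i = i₀) {κ : ℝ}
    (hN : (N : ℝ) = 2 ^ (((j.1 + j.2 : ℕ) : ℝ) + κ)) :
    ∫ x in unitSq, disc N p x * haar j m x =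
      (faber j.1 m.1 (p i₀).1 * faber j.2 m.2 (p i₀).2 - 2 ^ (κ - 2)) / 2 ^ (j.1 + j.2 + 2) := by
  have eq_zero_of_ne (i : Fin N) (hi : i ≠ i₀) :
      faber j.1 m.1 (p i).1 * faber j.2 m.2 (p i).2 = 0 := by
    by_contra hne
    obtain ⟨h₁, h₂⟩ := ne_zero_and_ne_zero_of_mul hne
    exact hi (huniq i ⟨not_imp_comm.mp faber_eq_zero_of_notMem h₁,
      not_imp_comm.mp faber_eq_zero_of_notMem h₂⟩)
  have hN' : (N : ℝ) / 2 ^ (j.1 + j.2 + 2) = 2 ^ (κ - 2) := by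
    rw [hN, ← Real.rpow_natCast, ← Real.rpow_sub two_pos]
    push_cast
    congr 1
    ring
  rw [integral_disc_mul_haar hp (lt_two_pow_of_mem_dyadicIco hi₀.1 (hp i₀).1.2)
      (lt_two_pow_of_mem_dyadicIco hi₀.2 (hp i₀).2.2),
    Fintype.sum_eq_single i₀ eq_zero_of_ne, hN']

end HaarTwoDim

section Gamma

variable {κ α β : ℝ}

lemma gk_nonneg : 0 ≤ gk κ α β := by
  unfold gk
  positivity

lemma hfun_le_gk (hα : α ∈ Set.Icc (1 / 2) 1) (hβ : β ∈ Set.Icc (1 / 2) 1) :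
    hfun κ ≤ gk κ α β := by
  have hfun_le_of_mem_Ico : Set.Ico (1 / 2 : ℝ) 1 ×ˢ Set.Ico (1 / 2 : ℝ) 1 ⊆
      {q : ℝ × ℝ | hfun κ ≤ gk κ q.1 q.2} := by
    rintro ⟨a, b⟩ ⟨ha, hb⟩
    refine csInf_le (a := gk κ a b) ⟨0, ?_⟩ ⟨a, b, ha.1, ha.2, hb.1, hb.2, rfl⟩
    rintro _ ⟨_, _, _, _, _, _, rfl⟩
    exact gk_nonneg
  have closed_superlevel : IsClosed {q : ℝ × ℝ | hfun κ ≤ gk κ q.1 q.2} :=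
    isClosed_le continuous_const (by unfold gk; fun_prop)
  have hmem : (α, β) ∈ closure (Set.Ico (1 / 2 : ℝ) 1 ×ˢ Set.Ico (1 / 2 : ℝ) 1) := by
    rw [closure_prod_eq, closure_Ico (by norm_num)]
    exact ⟨hα, hβ⟩
  exact closure_minimal hfun_le_of_mem_Ico closed_superlevel hmem

lemma sixteen_mul_gam_le_hfun : 16 * gam κ ≤ hfun κ := by
  have hpow : (2 : ℝ) ^ (-4 : ℝ) = 1 / 16 := by
    rw [Real.rpow_neg two_pos.le, Real.rpow_ofNat]
    norm_num
  have hle : gam κ ≤ (2 : ℝ) ^ (-4 : ℝ) * hfun κ := min_le_right _ _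
  linarith [hpow ▸ hle]

lemma sixteen_mul_gam_le_sq : 16 * gam κ ≤ 9 / 2 * ((2 : ℝ) ^ (κ - 4)) ^ 2 := by
  have hpow : (2 : ℝ) ^ (2 * κ - 13) = (2 ^ (κ - 4)) ^ 2 / 32 := by
    rw [← Real.rpow_mul_natCast two_pos.le,
      show 2 * κ - 13 = (κ - 4) * (2 : ℕ) - (5 : ℕ) by push_cast; ring,
      Real.rpow_sub_natCast two_ne_zero]
    norm_num
  have hle : gam κ ≤ 9 * (2 : ℝ) ^ (2 * κ - 13) := min_le_left _ _
  linarith [hpow ▸ hle]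

lemma sixteen_mul_gam_le_sq_add_sq (u : ℝ) :
    16 * gam κ ≤ (u - (2 : ℝ) ^ (κ - 2)) ^ 2 + (u - (2 : ℝ) ^ (κ - 4)) ^ 2 := by
  have hpow : (2 : ℝ) ^ (κ - 2) = 4 * 2 ^ (κ - 4) := by
    rw [show κ - 2 = κ - 4 + (2 : ℕ) by push_cast; ring, Real.rpow_add_natCast two_ne_zero]
    ring
  rw [hpow]
  linarith [sixteen_mul_gam_le_sq (κ := κ), sq_nonneg (2 * u - 5 * 2 ^ (κ - 4))]

lemma sixteen_mul_gam_le_sum_sq (hα : α ≤ 1) (hβ : β ≤ 1) :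
    16 * gam κ ≤ (α * β - (2 : ℝ) ^ (κ - 2)) ^ 2 +
      (min α (1 - α) * β - (2 : ℝ) ^ (κ - 4)) ^ 2 +
      (α * min β (1 - β) - (2 : ℝ) ^ (κ - 4)) ^ 2 := by
  rcases le_total α (1 / 2) with hα' | hα'
  · rw [min_eq_left (by linarith : α ≤ 1 - α)]
    exact le_add_of_le_of_nonneg (sixteen_mul_gam_le_sq_add_sq _) (sq_nonneg _)
  rcases le_total β (1 / 2) with hβ' | hβ'
  · rw [min_eq_left (by linarith : β ≤ 1 - β), add_right_comm]
    exact le_add_of_le_of_nonneg (sixteen_mul_gam_le_sq_add_sq _) (sq_nonneg _)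
  · rw [min_eq_right (by linarith : 1 - α ≤ α), min_eq_right (by linarith : 1 - β ≤ β),
      add_right_comm]
    exact sixteen_mul_gam_le_hfun.trans (hfun_le_gk ⟨hα', hα⟩ ⟨hβ', hβ⟩)

end Gamma

section RhoLowerBound

variable {N : ℕ} {p : Fin N → ℝ × ℝ} {j m : ℕ × ℕ} {i₀ : Fin N} {κ : ℝ}

lemma integral_disc_mul_haar_of_unique_of_le (hp : ∀ i, p i ∈ unitSq)
    (hi₀ : p i₀ ∈ dyadic j m) (huniq : ∀ i, p i ∈ dyadic j m → i = i₀)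
    (hN : (N : ℝ) = 2 ^ (((j.1 + j.2 : ℕ) : ℝ) + κ)) {j' m' : ℕ × ℕ} (hle : j ≤ j')
    (hj' : j'.1 + j'.2 = j.1 + j.2 + 1) (hpm' : p i₀ ∈ dyadic j' m') :
    ∫ x in unitSq, disc N p x * haar j' m' x =
      (faber j'.1 m'.1 (p i₀).1 * faber j'.2 m'.2 (p i₀).2 / 2 - 2 ^ (κ - 4)) /
        2 ^ (j.1 + j.2 + 2) := by
  have huniq' (i : Fin N) (hi : p i ∈ dyadic j' m') : i = i₀ :=
    huniq i (dyadic_subset_of_mem hle hi₀ hpm' hi)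
  have hN' : (N : ℝ) = 2 ^ (((j'.1 + j'.2 : ℕ) : ℝ) + (κ - 1)) := by
    rw [hN, hj']
    push_cast
    ring_nf
  have hpow : (2 : ℝ) ^ (κ - 1 - 2) = 2 * 2 ^ (κ - 4) := by
    rw [show κ - 1 - 2 = 1 + (κ - 4) by ring, Real.rpow_add two_pos, Real.rpow_one]
  rw [integral_disc_mul_haar_of_unique hp hpm' huniq' hN', hpow, hj']
  ring

lemma integral_disc_mul_haar_succ_fst (hp : ∀ i, p i ∈ unitSq) (hi₀ : p i₀ ∈ dyadic j m)
    (huniq : ∀ i, p i ∈ dyadic j m → i = i₀)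
    (hN : (N : ℝ) = 2 ^ (((j.1 + j.2 : ℕ) : ℝ) + κ)) {m' : ℕ × ℕ}
    (hpm' : p i₀ ∈ dyadic (j.1 + 1, j.2) m') :
    ∫ x in unitSq, disc N p x * haar (j.1 + 1, j.2) m' x =
      (min (faber j.1 m.1 (p i₀).1) (1 - faber j.1 m.1 (p i₀).1) * faber j.2 m.2 (p i₀).2 -
        2 ^ (κ - 4)) / 2 ^ (j.1 + j.2 + 2) := by
  rw [integral_disc_mul_haar_of_unique_of_le hp hi₀ huniq hN
      (j' := (j.1 + 1, j.2)) ⟨Nat.le_succ _, le_rfl⟩ (add_right_comm _ _ _) hpm',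
    faber_succ hi₀.1 hpm'.1, ← eq_of_mem_dyadicIco hi₀.2 hpm'.2, mul_assoc,
    mul_div_cancel_left₀ _ two_ne_zero]

lemma integral_disc_mul_haar_succ_snd (hp : ∀ i, p i ∈ unitSq) (hi₀ : p i₀ ∈ dyadic j m)
    (huniq : ∀ i, p i ∈ dyadic j m → i = i₀)
    (hN : (N : ℝ) = 2 ^ (((j.1 + j.2 : ℕ) : ℝ) + κ)) {m'' : ℕ × ℕ}
    (hpm'' : p i₀ ∈ dyadic (j.1, j.2 + 1) m'') :
    ∫ x in unitSq, disc N p x * haar (j.1, j.2 + 1) m'' x =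
      (faber j.1 m.1 (p i₀).1 * min (faber j.2 m.2 (p i₀).2) (1 - faber j.2 m.2 (p i₀).2) -
        2 ^ (κ - 4)) / 2 ^ (j.1 + j.2 + 2) := by
  rw [integral_disc_mul_haar_of_unique_of_le hp hi₀ huniq hN
      (j' := (j.1, j.2 + 1)) ⟨le_rfl, Nat.le_succ _⟩ (add_assoc _ _ _).symm hpm'',
    faber_succ hi₀.2 hpm''.2, ← eq_of_mem_dyadicIco hi₀.1 hpm''.1, mul_left_comm,
    mul_div_cancel_left₀ _ two_ne_zero]

theorem rho_lower_bound_levelM1_general (hp : ∀ i, p i ∈ unitSq) (hi₀ : p i₀ ∈ dyadic j m)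
    (huniq : ∀ i, p i ∈ dyadic j m → i = i₀)
    (hN : (N : ℝ) = 2 ^ (((j.1 + j.2 : ℕ) : ℝ) + κ)) {m' m'' : ℕ × ℕ}
    (hpm' : p i₀ ∈ dyadic (j.1 + 1, j.2) m') (hpm'' : p i₀ ∈ dyadic (j.1, j.2 + 1) m'') :
    gam κ ≤ (2 : ℝ) ^ (2 * (j.1 + j.2)) *
      ((∫ x in unitSq, disc N p x * haar j m x) ^ 2 +
       (∫ x in unitSq, disc N p x * haar (j.1 + 1, j.2) m' x) ^ 2 +
       (∫ x in unitSq, disc N p x * haar (j.1, j.2 + 1) m'' x) ^ 2) := by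
  rw [integral_disc_mul_haar_of_unique hp hi₀ huniq hN,
    integral_disc_mul_haar_succ_fst hp hi₀ huniq hN hpm',
    integral_disc_mul_haar_succ_snd hp hi₀ huniq hN hpm'']
  have hsum := sixteen_mul_gam_le_sum_sq (κ := κ)
    (faber_le_one (j := j.1) (m := m.1) (z := (p i₀).1))
    (faber_le_one (j := j.2) (m := m.2) (z := (p i₀).2))
  have hpow : (2 : ℝ) ^ (j.1 + j.2 + 2) = 4 * 2 ^ (j.1 + j.2) := by ring
  simp only [hpow, pow_mul', div_pow, mul_pow]
  field_simp
  linarith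

end RhoLowerBound

/-- If `N = 2^{M+κ}`, `|j| = M+1`, and `I_{j,m}` contains exactly one point `p i₀` of `P`,
and `I_{j',m'}, I_{j'',m''}` (with `j' = (j₁+1,j₂)`, `j'' = (j₁,j₂+1)`) are the dyadic
subintervals of `I_{j,m}` containing the same point, then
`2^{2M}·(μ_{j,m}² + μ_{j',m'}² + μ_{j'',m''}²) ≥ 2^{-2}·γ(κ−1)`. -/
theorem rho_lower_bound_levelM1 (M : ℕ) (κ : ℝ) (hκ0 : 0 ≤ κ) (hκ1 : κ < 1)
    (N : ℕ) (p : Fin N → ℝ × ℝ) (hp : ∀ i, p i ∈ unitSq)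
    (hN : (N : ℝ) = 2 ^ ((M : ℝ) + κ))
    (j : ℕ × ℕ) (hj : j.1 + j.2 = M + 1)
    (m : ℕ × ℕ) (hm1 : m.1 < 2 ^ j.1) (hm2 : m.2 < 2 ^ j.2)
    (i₀ : Fin N) (hi₀ : p i₀ ∈ dyadic j m)
    (huniq : ∀ i, p i ∈ dyadic j m → i = i₀)
    (m' : ℕ × ℕ) (hm'1 : m'.1 < 2 ^ (j.1 + 1)) (hm'2 : m'.2 < 2 ^ j.2)
    (hpm' : p i₀ ∈ dyadic (j.1 + 1, j.2) m')
    (m'' : ℕ × ℕ) (hm''1 : m''.1 < 2 ^ j.1) (hm''2 : m''.2 < 2 ^ (j.2 + 1))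
    (hpm'' : p i₀ ∈ dyadic (j.1, j.2 + 1) m'') :
    (2:ℝ) ^ (-2 : ℝ) * gam (κ - 1) ≤ (2:ℝ) ^ (2 * M) *
      ((∫ x in unitSq, disc N p x * haar j m x) ^ 2 +
       (∫ x in unitSq, disc N p x * haar (j.1 + 1, j.2) m' x) ^ 2 +
       (∫ x in unitSq, disc N p x * haar (j.1, j.2 + 1) m'' x) ^ 2) := by
  have hN' : (N : ℝ) = 2 ^ (((j.1 + j.2 : ℕ) : ℝ) + (κ - 1)) := by
    rw [hN, hj]
    push_cast
    ring_nf
  have hgam := rho_lower_bound_levelM1_general hp hi₀ huniq hN' hpm' hpm''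
  rw [hj, mul_add_one, pow_add, mul_comm (2 ^ (2 * M)), mul_assoc] at hgam
  rw [Real.rpow_neg two_pos.le, Real.rpow_ofNat]
  exact (inv_mul_le_iff₀ (by positivity)).mpr hgam

end
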